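/- Let ψ_0,…,ψ_{r−1}, f_1,…,f_n, and g_{j,i} (1 ≤ j ≤ n, 1 ≤ i ≤ m) be real polynomials in n variables, let k > 0, and define p := Σ_{j=1}^n (∂ψ_{r−1}/∂x_j)·f_j + k·ψ_{r−1} and q_i := Σ_{j=1}^n (∂ψ_{r−1}/∂x_j)·g_{j,i}. Suppose there exist polynomials θ_1,…,θ_m, sum-of-squares polynomials α_0, α_1, γ_0,…,γ_{r−1}, and a positive integer s such that the polynomial identity α_0 − α_1·p + Σ_{i=1}^m θ_i·q_i + Σ_{i=0}^{r−1} γ_i·ψ_i + p^{2s} = 0 holds. Then there is no x ∈ ℝ^n satisfying ψ_i(x) ≥ 0 for all i = 0,…,r−1, q_i(x) = 0 for all i = 1,…,m, and p(x) < 0; consequently, for every x with ψ_i(x) ≥ 0 for all i = 0,…,r−1 there exists u ∈ ℝ^m with p(x) + Σ_{i=1}^m q_i(x)·u_i ≥ 0. -/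

import Mathlib

open MvPolynomial

/-- A multivariate real polynomial is a sum of squares. -/
def IsSOS {n : ℕ} (p : MvPolynomial (Fin n) ℝ) : Prop :=
  ∃ (k : ℕ) (g : Fin k → MvPolynomial (Fin n) ℝ), p = ∑ i, (g i) ^ 2

theorem IsSOS.eval_nonneg' {n : ℕ} {p : MvPolynomial (Fin n) ℝ} (h : IsSOS p)
    (x : Fin n → ℝ) : 0 ≤ eval x p := by
  obtain ⟨k, g, rfl⟩ := h
  rw [map_sum]
  refine Finset.sum_nonneg fun i _ => ?_
  rw [map_pow]
  exact sq_nonneg _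

/-- Theorem 4, soundness direction of the SOS certificate (5) for HOCBF verification.
Here `r = rm + 1`, so `ψ : Fin (rm + 1)` stands for `ψ_0, …, ψ_{r-1}`, and
`ψ (Fin.last rm)` is `ψ_{r-1}`. -/
theorem hocbf_sos_certificate_sound
    (n m rm : ℕ)
    (ψ : Fin (rm + 1) → MvPolynomial (Fin n) ℝ)
    (f : Fin n → MvPolynomial (Fin n) ℝ)
    (g : Fin n → Fin m → MvPolynomial (Fin n) ℝ)
    (k : ℝ) (hk : 0 < k)
    (p : MvPolynomial (Fin n) ℝ)
    (hp : p = ∑ j, pderiv j (ψ (Fin.last rm)) * f j + C k * ψ (Fin.last rm))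
    (q : Fin m → MvPolynomial (Fin n) ℝ)
    (hq : ∀ i, q i = ∑ j, pderiv j (ψ (Fin.last rm)) * g j i)
    (θ : Fin m → MvPolynomial (Fin n) ℝ)
    (α₀ α₁ : MvPolynomial (Fin n) ℝ) (hα₀ : IsSOS α₀) (hα₁ : IsSOS α₁)
    (γ : Fin (rm + 1) → MvPolynomial (Fin n) ℝ) (hγ : ∀ i, IsSOS (γ i))
    (s : ℕ) (hs : 0 < s)
    (hid : α₀ - α₁ * p + ∑ i, θ i * q i + ∑ i, γ i * ψ i + p ^ (2 * s) = 0) :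
    (¬ ∃ x : Fin n → ℝ,
        (∀ i, 0 ≤ eval x (ψ i)) ∧ (∀ i, eval x (q i) = 0) ∧ eval x p < 0) ∧
      (∀ x : Fin n → ℝ, (∀ i, 0 ≤ eval x (ψ i)) →
        ∃ u : Fin m → ℝ, 0 ≤ eval x p + ∑ i, eval x (q i) * u i) := by
  have key : ¬ ∃ x : Fin n → ℝ,
      (∀ i, 0 ≤ eval x (ψ i)) ∧ (∀ i, eval x (q i) = 0) ∧ eval x p < 0 := by
    rintro ⟨x, hψ, hq0, hpx⟩
    have h := congrArg (eval x) hid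
    simp only [map_add, map_sub, map_mul, map_sum, map_pow, map_zero, hq0, mul_zero,
      Finset.sum_const_zero, add_zero] at h
    have h0 := hα₀.eval_nonneg' x
    have h1 := mul_nonneg (hα₁.eval_nonneg' x) (neg_nonneg.mpr hpx.le)
    have h2 : 0 ≤ ∑ i, eval x (γ i) * eval x (ψ i) :=
      Finset.sum_nonneg fun i _ => mul_nonneg ((hγ i).eval_nonneg' x) (hψ i)
    have h3 : 0 < (eval x p) ^ (2 * s) := (even_two_mul s).pow_pos hpx.ne
    linarith
  refine ⟨key, fun x hψ => ?_⟩
  by_cases hall : ∀ i, eval x (q i) = 0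
  · refine ⟨0, ?_⟩
    have : 0 ≤ eval x p := by
      by_contra hneg
      exact key ⟨x, hψ, hall, not_le.mp hneg⟩
    simpa using this
  · obtain ⟨i, hi⟩ := not_forall.mp hall
    refine ⟨Pi.single i (-(eval x p) / eval x (q i)), ?_⟩
    have hsum : ∑ j, eval x (q j) * (Pi.single i (-(eval x p) / eval x (q i)) : Fin m → ℝ) j
        = -(eval x p) := by
      rw [Finset.sum_eq_single i]
      · rw [Pi.single_eq_same, mul_div_cancel₀ _ hi]
      · intro j _ hj
        rw [Pi.single_eq_of_ne hj, mul_zero]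
      · simp
    rw [hsum, add_neg_cancel]
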